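/- In the noisy-barrier setup, for all 0 ≤ t ≤ θ and every bounded F_θ ⊗ B(ℝ)-measurable function φ_θ : Ω × ℝ → ℝ, one has, P-almost surely, E_P[φ_θ(·, L + ε_θ) 1_{X*_θ > L} | F^I_t] = E_P[φ_θ(·, L + ε_θ) 1_{X*_θ > L} | F_t ∨ σ(L_t)]; that is, the σ-algebra σ(ε_s − ε_t : s ≤ t) of past noise increments can be dropped from the conditioning. (First reduction step in the proof of Proposition 5.1.) -/

import Mathlib

open MeasureTheory ProbabilityTheory Set
open scoped NNReal Classical

noncomputable section

/-- Running infimum `X*_t = inf_{s ≤ t} X_s` of the process `X` over the time interval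
`[0, t]`. -/
def runInf {Ω : Type*} (X : ℝ≥0 → Ω → ℝ) (t : ℝ≥0) (ω : Ω) : ℝ :=
  ⨅ s : Set.Icc (0 : ℝ≥0) t, X s.1 ω

/-- The insider's default-free σ-algebra `F^I_t = F_t ∨ σ(L_s = L + ε_s : s ≤ t)`. -/
def insiderSigma {Ω : Type*} [m0 : MeasurableSpace Ω] (F : Filtration ℝ≥0 m0)
    (L : Ω → ℝ) (ε : ℝ≥0 → Ω → ℝ) (t : ℝ≥0) : MeasurableSpace Ω :=
  F t ⊔ ⨆ s ∈ Set.Iic t, MeasurableSpace.comap (fun ω => L ω + ε s ω) inferInstance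


section Soft

variable {Ω : Type*} [m0 : MeasurableSpace Ω] {P : Measure Ω} [IsProbabilityMeasure P]

/-- sets `A ∩ B` generate the sup. -/
lemma sup_eq_generateFrom_inter {Ω : Type*} (m₁ m₂ : MeasurableSpace Ω) :
    m₁ ⊔ m₂ = MeasurableSpace.generateFrom
      {s | ∃ A B, MeasurableSet[m₁] A ∧ MeasurableSet[m₂] B ∧ s = A ∩ B} := by
  apply le_antisymm
  · refine sup_le ?_ ?_
    · intro s hs
      exact MeasurableSpace.measurableSet_generateFrom
        ⟨s, univ, hs, @MeasurableSet.univ _ m₂, by simp⟩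
    · intro s hs
      exact MeasurableSpace.measurableSet_generateFrom
        ⟨univ, s, @MeasurableSet.univ _ m₁, hs, by simp⟩
  · refine MeasurableSpace.generateFrom_le ?_
    rintro s ⟨A, B, hA, hB, rfl⟩
    have h1 : MeasurableSet[m₁ ⊔ m₂] A := (le_sup_left : m₁ ≤ m₁ ⊔ m₂) _ hA
    have h2 : MeasurableSet[m₁ ⊔ m₂] B := (le_sup_right : m₂ ≤ m₁ ⊔ m₂) _ hB
    exact @MeasurableSet.inter _ (m₁ ⊔ m₂) _ _ h1 h2

lemma isPiSystem_inter_sets {Ω : Type*} (m₁ m₂ : MeasurableSpace Ω) :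
    IsPiSystem {s | ∃ A B, MeasurableSet[m₁] A ∧ MeasurableSet[m₂] B ∧ s = A ∩ B} := by
  rintro _ ⟨A, B, hA, hB, rfl⟩ _ ⟨A', B', hA', hB', rfl⟩ _
  exact ⟨A ∩ A', B ∩ B', @MeasurableSet.inter _ m₁ _ _ hA hA',
    @MeasurableSet.inter _ m₂ _ _ hB hB', by ext; simp; tauto⟩

lemma indep_sup_right {m₁ m₂ m₃ : MeasurableSpace Ω} (h₁ : m₁ ≤ m0) (h₂ : m₂ ≤ m0) (h₃ : m₃ ≤ m0)
    (h12 : Indep m₁ m₂ P) (h123 : Indep (m₁ ⊔ m₂) m₃ P) : Indep m₁ (m₂ ⊔ m₃) P := by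
  refine IndepSets.indep (p1 := {s | MeasurableSet[m₁] s})
    (p2 := {s | ∃ A B, MeasurableSet[m₂] A ∧ MeasurableSet[m₃] B ∧ s = A ∩ B}) h₁ (sup_le h₂ h₃)
    (@MeasurableSpace.isPiSystem_measurableSet _ m₁) (isPiSystem_inter_sets m₂ m₃)
    (@MeasurableSpace.generateFrom_measurableSet _ m₁).symm (sup_eq_generateFrom_inter m₂ m₃) ?_
  rw [IndepSets_iff]
  rintro A _ hA ⟨B, C, hB, hC, rfl⟩
  rw [Indep_iff] at h12 h123
  have hA' : MeasurableSet[m₁ ⊔ m₂] A := (le_sup_left : m₁ ≤ m₁ ⊔ m₂) _ hA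
  have hB' : MeasurableSet[m₁ ⊔ m₂] B := (le_sup_right : m₂ ≤ m₁ ⊔ m₂) _ hB
  rw [← inter_assoc, h123 _ _ (@MeasurableSet.inter _ (m₁ ⊔ m₂) _ _ hA' hB') hC,
    h123 _ _ hB' hC, h12 _ _ hA hB, mul_assoc]

/-- integral over independent set -/
lemma setIntegral_inter_of_indep {m₁ m₂ : MeasurableSpace Ω} (h₁ : m₁ ≤ m0) (h₂ : m₂ ≤ m0)
    (h : Indep m₁ m₂ P) {f : Ω → ℝ} (hf : Measurable[m₂] f)
    {A B : Set Ω} (hA : MeasurableSet[m₂] A) (hB : MeasurableSet[m₁] B) :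
    ∫ ω in A ∩ B, f ω ∂P = P.real B * ∫ ω in A, f ω ∂P := by
  have hg : Measurable[m₂] (A.indicator f) := hf.indicator hA
  have hi : Measurable[m₁] (B.indicator (fun _ => (1:ℝ))) :=
    (@measurable_const _ _ _ m₁ _).indicator hB
  have hind : IndepFun (B.indicator (fun _ => (1:ℝ))) (A.indicator f) P := by
    rw [IndepFun_iff_Indep]
    exact indep_of_indep_of_le h hi.comap_le hg.comap_le
  have := hind.integral_fun_mul_eq_mul_integral (hi.mono h₁ le_rfl).aestronglyMeasurable
    (hg.mono h₂ le_rfl).aestronglyMeasurable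
  rw [integral_indicator (h₂ _ hA), integral_indicator_const _ (h₁ _ hB)] at this
  rw [← integral_indicator ((h₂ _ hA).inter (h₁ _ hB))]
  simp only [smul_eq_mul, mul_one] at this
  rw [← this]
  congr 1
  ext ω
  by_cases h1 : ω ∈ A <;> by_cases h2 : ω ∈ B <;> simp [h1, h2]

lemma condExp_sup_of_indep {m₁ G M : MeasurableSpace Ω} (hG : G ≤ m0) (hM : M ≤ m0)
    (h1M : m₁ ≤ M) (h : Indep G M P) {f : Ω → ℝ} (hf : Measurable[M] f) (hfi : Integrable f P) :
    P[f|m₁ ⊔ G] =ᵐ[P] P[f|m₁] := by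
  have hm₁ : m₁ ≤ m0 := h1M.trans hM
  have hle : m₁ ⊔ G ≤ m0 := sup_le hm₁ hG
  symm
  refine ae_eq_condExp_of_forall_setIntegral_eq hle hfi (fun _ _ _ => integrable_condExp.integrableOn)
    ?_ (stronglyMeasurable_condExp.mono (le_sup_left : m₁ ≤ m₁ ⊔ G)).aestronglyMeasurable
  intro s hs _
  have key : ∀ s, MeasurableSet[m₁ ⊔ G] s → ∫ x in s, (P[f|m₁]) x ∂P = ∫ x in s, f x ∂P := by
    intro s hs
    induction s, hs using MeasurableSpace.induction_on_inter (sup_eq_generateFrom_inter m₁ G)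
      (isPiSystem_inter_sets m₁ G) with
    | empty => simp
    | basic s hs =>
      obtain ⟨A, B, hA, hB, rfl⟩ := hs
      rw [setIntegral_inter_of_indep (m0 := m0) hG hM h hf (h1M _ hA) hB,
        setIntegral_inter_of_indep (m0 := m0) hG hM h
          (stronglyMeasurable_condExp.measurable.mono h1M le_rfl) (h1M _ hA) hB,
        setIntegral_condExp hm₁ hfi hA]
    | compl s hs ih =>
      have e1 := integral_add_compl (hle _ hs) hfi
      have e2 := integral_add_compl (hle _ hs) (integrable_condExp (m := m₁) (μ := P) (f := f))
      rw [integral_condExp hm₁] at e2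
      linarith
    | iUnion s hd hs ih =>
      rw [integral_iUnion (fun i => hle _ (hs i)) hd integrable_condExp.integrableOn,
        integral_iUnion (fun i => hle _ (hs i)) hd hfi.integrableOn]
      exact tsum_congr ih
  exact key s hs

lemma measurable_runInf {Ω : Type*} {m : MeasurableSpace Ω} {X : ℝ≥0 → Ω → ℝ} (t : ℝ≥0)
    (hX : ∀ s ≤ t, Measurable[m] (X s)) (hc : ∀ ω, Continuous fun s => X s ω) :
    Measurable[m] (runInf X t) := by
  have : Nonempty (Set.Icc (0 : ℝ≥0) t) := ⟨⟨0, by simp⟩⟩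
  obtain ⟨S, hSc, hSd⟩ := TopologicalSpace.exists_countable_dense (Set.Icc (0 : ℝ≥0) t)
  have hb : ∀ ω, BddBelow (Set.range fun s : Set.Icc (0 : ℝ≥0) t => X s.1 ω) := fun ω =>
    (isCompact_range ((hc ω).comp continuous_subtype_val)).bddBelow
  have : runInf X t = fun ω => ⨅ s : S, X s.1.1 ω := by
    ext ω
    exact (hSd.ciInf ((hc ω).comp continuous_subtype_val) (hb ω)).symm
  rw [this]
  have : Countable S := hSc
  exact Measurable.iInf fun s => hX _ s.1.2.2

end Soft

section Trig

/-- the character `x ↦ exp(i x)` -/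
abbrev ee (x : ℝ) : ℂ := Complex.exp (x * Complex.I)

lemma ee_add (x y : ℝ) : ee (x + y) = ee x * ee y := by
  simp only [ee]; rw [← Complex.exp_add]; push_cast; ring_nf

lemma norm_ee (x : ℝ) : ‖ee x‖ = 1 := Complex.norm_exp_ofReal_mul_I x

lemma ee_sum (n : ℕ) (y : ℕ → ℝ) :
    ee (∑ k ∈ Finset.range n, y k) = ∏ k ∈ Finset.range n, ee (y k) := by
  induction n with
  | zero => simp [ee]
  | succ n ih => rw [Finset.sum_range_succ, ee_add, ih, Finset.prod_range_succ]

lemma ee_eq (x : ℝ) : ee x = (Real.cos x : ℂ) + (Real.sin x : ℂ) * Complex.I := by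
  simp [ee, Complex.exp_mul_I]

lemma ee_neg_eq (x : ℝ) : ee (-x) = (Real.cos x : ℂ) - (Real.sin x : ℂ) * Complex.I := by
  rw [ee_eq]; simp; ring

/-- the low-frequency surrogate of `exp(i a y)` -/
def gg (a y : ℝ) : ℂ := ((1 - a ^ 2 * (1 - Real.cos y) : ℝ) : ℂ) + ((a * Real.sin y : ℝ) : ℂ) * Complex.I

lemma gg_eq (a y : ℝ) : gg a y = ((1 - a ^ 2 : ℝ) : ℂ) + ((a ^ 2 / 2 + a / 2 : ℝ) : ℂ) * ee y
    + ((a ^ 2 / 2 - a / 2 : ℝ) : ℂ) * ee (-y) := by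
  rw [ee_eq, ee_neg_eq, gg]; push_cast; ring

lemma normSq_gg (a y : ℝ) : ‖gg a y‖ ^ 2 ≤ 1 + 2 * a ^ 4 * (1 - Real.cos y) := by
  rw [← Complex.normSq_eq_norm_sq, gg, Complex.normSq_add_mul_I]
  have h1 := Real.sin_sq_add_cos_sq y
  have h2 := Real.cos_le_one y
  have h3 := Real.neg_one_le_cos y
  have : (1 - a ^ 2 * (1 - Real.cos y)) ^ 2 + (a * Real.sin y) ^ 2
      = 1 + (a ^ 4 - a ^ 2) * (1 - Real.cos y) ^ 2 := by
    have : Real.sin y ^ 2 = 1 - Real.cos y ^ 2 := by linarith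
    rw [mul_pow, this]; ring
  rw [this]
  have h4 : (1 - Real.cos y) ^ 2 ≤ 2 * (1 - Real.cos y) := by nlinarith
  have h5 : 0 ≤ a ^ 2 * (1 - Real.cos y) ^ 2 := by positivity
  have h6 : a ^ 4 * (1 - Real.cos y) ^ 2 ≤ a ^ 4 * (2 * (1 - Real.cos y)) := by gcongr
  nlinarith

lemma gg_sub_ee (a : ℝ) : ∃ C, 0 ≤ C ∧ ∀ y : ℝ, |y| ≤ 1 →
    ‖gg a y - ee (a * y)‖ ≤ C * |y| * (1 - Real.cos y) := by
  refine ⟨4 * (a ^ 2 + |a| + |a| ^ 3 * Real.exp |a|), by positivity, fun y hy => ?_⟩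
  have hc := Real.cos_bound hy
  have hs := Real.sin_bound hy
  have hy0 := abs_nonneg y
  have hy3 : |y| ^ 4 ≤ |y| ^ 3 := pow_le_pow_of_le_one hy0 hy (by norm_num)
  have hy5 : |y| ^ 5 ≤ |y| ^ 3 := pow_le_pow_of_le_one hy0 hy (by norm_num)
  have hy2 : |y| ^ 4 ≤ |y| ^ 2 := pow_le_pow_of_le_one hy0 hy (by norm_num)
  have hq : |y| ^ 2 ≤ 4 * (1 - Real.cos y) := by
    have := abs_le.1 hc
    have e : |y| ^ 2 = y ^ 2 := sq_abs y
    nlinarith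
  have hcube : |y| ^ 3 ≤ 4 * (|y| * (1 - Real.cos y)) := by nlinarith
  have hexp := Complex.norm_exp_sub_sum_le_norm_mul_exp (((a * y : ℝ) : ℂ) * Complex.I) 3
  have hn : ‖((a * y : ℝ) : ℂ) * Complex.I‖ = |a| * |y| := by
    rw [norm_mul, Complex.norm_I, mul_one, Complex.norm_real, Real.norm_eq_abs, abs_mul]
  rw [hn] at hexp
  simp only [Finset.sum_range_succ, Finset.sum_range_zero, Nat.factorial] at hexp
  have hb : Real.exp (|a| * |y|) ≤ Real.exp |a| := by
    apply Real.exp_le_exp.2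
    nlinarith [abs_nonneg a]
  have hexp2 : (|a| * |y|) ^ 3 * Real.exp (|a| * |y|) ≤ |a| ^ 3 * Real.exp |a| * |y| ^ 3 := by
    rw [mul_pow]
    calc _ ≤ |a| ^ 3 * |y| ^ 3 * Real.exp |a| := by gcongr
      _ = _ := by ring
  set T : ℂ := ee (a * y)
    - (1 + ((a * y : ℝ) : ℂ) * Complex.I + (((a * y : ℝ) : ℂ) * Complex.I) ^ 2 / 2) with hT
  have hTn : ‖T‖ ≤ |a| ^ 3 * Real.exp |a| * |y| ^ 3 := by
    refine le_trans (le_of_eq ?_) (hexp.trans hexp2)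
    rw [hT]; congr 1; simp [ee]
  have hdec : gg a y - ee (a * y) = ((a ^ 2 * (Real.cos y - (1 - y ^ 2 / 2)) : ℝ) : ℂ)
      + ((a * (Real.sin y - (y - y ^ 3 / 6)) - a * y ^ 3 / 6 : ℝ) : ℂ) * Complex.I - T := by
    rw [hT, gg, mul_pow, Complex.I_sq]; push_cast; ring
  rw [hdec]
  have n1 : ‖((a ^ 2 * (Real.cos y - (1 - y ^ 2 / 2)) : ℝ) : ℂ)‖ ≤ a ^ 2 * |y| ^ 3 := by
    rw [Complex.norm_real, Real.norm_eq_abs, abs_mul, abs_of_nonneg (sq_nonneg a)]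
    gcongr
    have := pow_nonneg hy0 3
    linarith
  have n2 : ‖((a * (Real.sin y - (y - y ^ 3 / 6)) - a * y ^ 3 / 6 : ℝ) : ℂ) * Complex.I‖
      ≤ |a| * |y| ^ 3 := by
    rw [norm_mul, Complex.norm_I, mul_one, Complex.norm_real, Real.norm_eq_abs]
    have e : a * (Real.sin y - (y - y ^ 3 / 6)) - a * y ^ 3 / 6
      = a * ((Real.sin y - (y - y ^ 3 / 6)) - y ^ 3 / 6) := by ring
    rw [e, abs_mul]
    gcongr
    refine (abs_sub _ _).trans ?_
    have : |y ^ 3 / 6| = |y| ^ 3 / 6 := by rw [abs_div, abs_pow]; norm_num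
    rw [this]
    have := pow_nonneg hy0 3
    linarith
  have t1 := norm_sub_le (((a ^ 2 * (Real.cos y - (1 - y ^ 2 / 2)) : ℝ) : ℂ)
      + ((a * (Real.sin y - (y - y ^ 3 / 6)) - a * y ^ 3 / 6 : ℝ) : ℂ) * Complex.I) T
  have t2 := norm_add_le ((a ^ 2 * (Real.cos y - (1 - y ^ 2 / 2)) : ℝ) : ℂ)
      (((a * (Real.sin y - (y - y ^ 3 / 6)) - a * y ^ 3 / 6 : ℝ) : ℂ) * Complex.I)
  have fin : (a ^ 2 + |a| + |a| ^ 3 * Real.exp |a|) * |y| ^ 3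
      ≤ (a ^ 2 + |a| + |a| ^ 3 * Real.exp |a|) * (4 * (|y| * (1 - Real.cos y))) := by gcongr
  linarith

lemma norm_prod_sub_prod_le' (n : ℕ) (a b : ℕ → ℂ) (m : ℕ → ℝ) (hm : ∀ k, 1 ≤ m k)
    (ha : ∀ k, ‖a k‖ ≤ m k) (hb : ∀ k, ‖b k‖ ≤ 1) :
    ‖∏ k ∈ Finset.range n, a k - ∏ k ∈ Finset.range n, b k‖
      ≤ (∏ k ∈ Finset.range n, m k) * ∑ k ∈ Finset.range n, ‖a k - b k‖ := by
  induction n with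
  | zero => simp
  | succ n ih =>
    rw [Finset.prod_range_succ, Finset.prod_range_succ, Finset.prod_range_succ,
      Finset.sum_range_succ]
    have e : (∏ k ∈ Finset.range n, a k) * a n - (∏ k ∈ Finset.range n, b k) * b n
      = (∏ k ∈ Finset.range n, a k) * (a n - b n)
        + (∏ k ∈ Finset.range n, a k - ∏ k ∈ Finset.range n, b k) * b n := by ring
    rw [e]
    refine (norm_add_le _ _).trans ?_
    rw [norm_mul, norm_mul, norm_prod]
    have hp : ∏ k ∈ Finset.range n, ‖a k‖ ≤ ∏ k ∈ Finset.range n, m k :=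
      Finset.prod_le_prod (fun _ _ => norm_nonneg _) (fun k _ => ha k)
    have hM : 0 ≤ ∏ k ∈ Finset.range n, m k :=
      Finset.prod_nonneg fun k _ => zero_le_one.trans (hm k)
    set M := ∏ k ∈ Finset.range n, m k
    set S := ∑ k ∈ Finset.range n, ‖a k - b k‖
    have hS : 0 ≤ S := Finset.sum_nonneg fun _ _ => norm_nonneg _
    have h1 : (∏ k ∈ Finset.range n, ‖a k‖) * ‖a n - b n‖ ≤ M * ‖a n - b n‖ := by gcongr
    have h2 : ‖∏ k ∈ Finset.range n, a k - ∏ k ∈ Finset.range n, b k‖ * ‖b n‖ ≤ M * S * 1 :=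
      mul_le_mul ih (hb n) (norm_nonneg _) (by positivity)
    have h3 : M * (S + ‖a n - b n‖) * 1 ≤ M * (S + ‖a n - b n‖) * m n :=
      mul_le_mul_of_nonneg_left (hm n) (by positivity)
    nlinarith

/-- the dominating random product -/
def RR (a : ℝ) (n : ℕ) (y : ℕ → ℝ) : ℝ :=
  ∏ k ∈ Finset.range n, (1 + (6 * a ^ 4 + 1) * (1 - Real.cos (y k)))

lemma sum_le_prod_one_add (n : ℕ) (x : ℕ → ℝ) (hx : ∀ k, 0 ≤ x k) :
    ∑ k ∈ Finset.range n, x k ≤ ∏ k ∈ Finset.range n, (1 + x k) - 1 := by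
  induction n with
  | zero => simp
  | succ n ih =>
    rw [Finset.sum_range_succ, Finset.prod_range_succ]
    have : 0 ≤ ∑ k ∈ Finset.range n, x k := Finset.sum_nonneg fun k _ => hx k
    nlinarith [hx n]

lemma prod_gg_good (a C η : ℝ) (hC0 : 0 ≤ C) (hη : 0 ≤ η) (hη1 : η ≤ 1)
    (hC : ∀ y : ℝ, |y| ≤ 1 → ‖gg a y - ee (a * y)‖ ≤ C * |y| * (1 - Real.cos y))
    (n : ℕ) (y : ℕ → ℝ) (hy : ∀ k < n, |y k| ≤ η) :
    ‖∏ k ∈ Finset.range n, gg a (y k) - ee (a * ∑ k ∈ Finset.range n, y k)‖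
      ≤ C * η * RR a n y := by
  have hs0 : ∀ k, 0 ≤ 1 - Real.cos (y k) := fun k => by linarith [Real.cos_le_one (y k)]
  have hs2 : ∀ k, 1 - Real.cos (y k) ≤ 2 := fun k => by linarith [Real.neg_one_le_cos (y k)]
  rw [Finset.mul_sum, ee_sum]
  refine (norm_prod_sub_prod_le' n _ _ (fun k => 1 + 2 * a ^ 4 * (1 - Real.cos (y k)))
    (fun k => ?_) (fun k => ?_) (fun k => (norm_ee _).le)).trans ?_
  · have := hs0 k
    have : 0 ≤ 2 * a ^ 4 * (1 - Real.cos (y k)) := by positivity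
    linarith
  · have h := normSq_gg a (y k)
    have := hs0 k
    have : 0 ≤ 2 * a ^ 4 * (1 - Real.cos (y k)) := by positivity
    nlinarith [norm_nonneg (gg a (y k))]
  · have hsum : ∑ k ∈ Finset.range n, ‖gg a (y k) - ee (a * y k)‖
        ≤ C * η * ∏ k ∈ Finset.range n, (1 + (1 - Real.cos (y k))) := by
      calc _ ≤ ∑ k ∈ Finset.range n, C * η * (1 - Real.cos (y k)) := by
            refine Finset.sum_le_sum fun k hk => ?_
            have hk' := hy k (Finset.mem_range.1 hk)
            refine (hC _ (hk'.trans hη1)).trans ?_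
            have := hs0 k
            gcongr
        _ = C * η * ∑ k ∈ Finset.range n, (1 - Real.cos (y k)) := by rw [Finset.mul_sum]
        _ ≤ _ := by
            have := sum_le_prod_one_add n (fun k => 1 - Real.cos (y k)) hs0
            gcongr
            linarith
    have hP : 0 ≤ ∏ k ∈ Finset.range n, (1 + 2 * a ^ 4 * (1 - Real.cos (y k))) :=
      Finset.prod_nonneg fun k _ => by have := hs0 k; positivity
    calc _ ≤ (∏ k ∈ Finset.range n, (1 + 2 * a ^ 4 * (1 - Real.cos (y k)))) *
          (C * η * ∏ k ∈ Finset.range n, (1 + (1 - Real.cos (y k)))) := by gcongr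
      _ = C * η * ∏ k ∈ Finset.range n, ((1 + 2 * a ^ 4 * (1 - Real.cos (y k))) *
            (1 + (1 - Real.cos (y k)))) := by rw [Finset.prod_mul_distrib]; ring
      _ ≤ _ := by
          unfold RR
          refine mul_le_mul_of_nonneg_left (Finset.prod_le_prod (fun k _ => ?_) fun k _ => ?_)
            (by positivity)
          · have := hs0 k; positivity
          · have h1 := hs0 k
            have h2 := hs2 k
            have : a ^ 4 * (1 - Real.cos (y k)) * (1 - Real.cos (y k))
              ≤ a ^ 4 * (1 - Real.cos (y k)) * 2 := by gcongr
            nlinarith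

lemma prod_gg_bad (a η : ℝ) (hη : 0 < η) (n : ℕ) (y : ℕ → ℝ) (x : ℝ) :
    ‖∏ k ∈ Finset.range n, gg a (y k) - ee x‖ ≤ η * RR a n y + (1 / η + 1) := by
  have hs0 : ∀ k, 0 ≤ 1 - Real.cos (y k) := fun k => by linarith [Real.cos_le_one (y k)]
  refine (norm_sub_le _ _).trans ?_
  rw [norm_ee]
  have h : ‖∏ k ∈ Finset.range n, gg a (y k)‖ ^ 2 ≤ RR a n y := by
    rw [norm_prod, ← Finset.prod_pow]
    refine Finset.prod_le_prod (fun _ _ => by positivity) fun k _ => (normSq_gg _ _).trans ?_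
    have := hs0 k
    have : 0 ≤ a ^ 4 * (1 - Real.cos (y k)) := by positivity
    nlinarith
  set z := ‖∏ k ∈ Finset.range n, gg a (y k)‖
  have h2 : z ≤ η * z ^ 2 + 1 / η := by
    have : η * z ^ 2 + 1 / η - z = ((η * z - 1 / 2) ^ 2 + 3 / 4) / η := by field_simp; ring
    have h3 : 0 ≤ ((η * z - 1 / 2) ^ 2 + 3 / 4) / η := by positivity
    linarith
  have h3 : η * z ^ 2 ≤ η * RR a n y := by gcongr
  linarith

end Trig

section Noise

variable {Ω : Type*} [m0 : MeasurableSpace Ω] {P : Measure Ω} [IsProbabilityMeasure P]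

/-- past noise increments -/
abbrev pastIncr {Ω : Type*} (ε : ℝ≥0 → Ω → ℝ) (t : ℝ≥0) : MeasurableSpace Ω :=
  ⨆ s ∈ Set.Iic t, MeasurableSpace.comap (fun ω => ε s ω - ε t ω) inferInstance

lemma measurable_incr {Ω : Type*} (ε : ℝ≥0 → Ω → ℝ) {s t : ℝ≥0} (h : s ≤ t) :
    Measurable[pastIncr ε t] (fun ω => ε s ω - ε t ω) := by
  rw [measurable_iff_comap_le]
  exact le_iSup₂_of_le s h le_rfl

lemma pastIncr_le {ε : ℝ≥0 → Ω → ℝ} (hε : ∀ s, Measurable (ε s)) (t : ℝ≥0) :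
    pastIncr ε t ≤ m0 :=
  iSup₂_le fun s _ => ((hε s).sub (hε t)).comap_le

lemma pastIncr_mono {Ω : Type*} (ε : ℝ≥0 → Ω → ℝ) {s t : ℝ≥0} (h : s ≤ t) : pastIncr ε s ≤ pastIncr ε t := by
  refine iSup₂_le fun r hr => ?_
  rw [← measurable_iff_comap_le]
  have h1 := measurable_incr ε (le_trans hr h)
  have h2 := measurable_incr ε h
  have : (fun ω => ε r ω - ε s ω) = fun ω => (ε r ω - ε t ω) - (ε s ω - ε t ω) := by
    ext ω; ring
  rw [this]
  exact h1.sub h2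

lemma measurable_ee : Measurable ee := by unfold ee; fun_prop

lemma continuous_ee : Continuous ee := by unfold ee; fun_prop

lemma integral_mul_of_indep {m₁ m₂ : MeasurableSpace Ω} (h₁ : m₁ ≤ m0) (h₂ : m₂ ≤ m0)
    (h : Indep m₁ m₂ P) {f g : Ω → ℂ} (hf : Measurable[m₁] f) (hg : Measurable[m₂] g) :
    ∫ ω, f ω * g ω ∂P = (∫ ω, f ω ∂P) * ∫ ω, g ω ∂P := by
  have hind : IndepFun f g P := by
    rw [IndepFun_iff_Indep]
    exact indep_of_indep_of_le h hf.comap_le hg.comap_le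
  exact hind.integral_fun_mul_eq_mul_integral (hf.mono h₁ le_rfl).aestronglyMeasurable
    (hg.mono h₂ le_rfl).aestronglyMeasurable

variable {ε : ℝ≥0 → Ω → ℝ}


lemma step_aux
    (hε_meas : ∀ s, Measurable (ε s))
    (hback : ∀ t : ℝ≥0, Indep (pastIncr ε t) (MeasurableSpace.comap (ε t) inferInstance) P)
    {s s' : ℝ≥0} (hss : s ≤ s') (u : ℝ) {Y : Ω → ℂ} (hY : Measurable[pastIncr ε s] Y) :
    (∫ ω, ee (u * ε s ω) ∂P) * ∫ ω, Y ω ∂P =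
      (∫ ω, ee (u * ε s' ω) ∂P) * ∫ ω, ee (u * (ε s ω - ε s' ω)) * Y ω ∂P := by
  have hm : ∀ r, Measurable[MeasurableSpace.comap (ε r) inferInstance] (fun ω => ee (u * ε r ω)) :=
    fun r => (measurable_ee.comp (measurable_const_mul u)).comp (comap_measurable (ε r))
  have hY' : Measurable[pastIncr ε s'] (fun ω => ee (u * (ε s ω - ε s' ω)) * Y ω) := by
    have h1 : Measurable[pastIncr ε s'] (fun ω => ee (u * (ε s ω - ε s' ω))) :=
      (measurable_ee.comp (measurable_const_mul u)).comp (measurable_incr ε hss)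
    exact h1.mul (hY.mono (pastIncr_mono ε hss) le_rfl)
  have e1 := integral_mul_of_indep (m0 := m0) (hε_meas s).comap_le (pastIncr_le hε_meas s)
    (hback s).symm (hm s) hY
  have e2 := integral_mul_of_indep (m0 := m0) (hε_meas s').comap_le (pastIncr_le hε_meas s')
    (hback s').symm (hm s') hY'
  rw [← e1, ← e2]
  congr 1
  ext ω
  rw [← mul_assoc, ← ee_add]
  congr 2
  ring

lemma step_char
    (hε_meas : ∀ s, Measurable (ε s))
    (hback : ∀ t : ℝ≥0, Indep (pastIncr ε t) (MeasurableSpace.comap (ε t) inferInstance) P)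
    {s s' : ℝ≥0} (hss : s ≤ s') (u : ℝ) :
    (∫ ω, ee (u * ε s ω) ∂P) =
      (∫ ω, ee (u * ε s' ω) ∂P) * ∫ ω, ee (u * (ε s ω - ε s' ω)) ∂P := by
  have := step_aux (P := P) hε_meas hback hss u (Y := fun _ => 1) (@measurable_const _ _ _ (pastIncr ε s) _)
  simpa using this

lemma step_mul
    (hε_meas : ∀ s, Measurable (ε s))
    (hback : ∀ t : ℝ≥0, Indep (pastIncr ε t) (MeasurableSpace.comap (ε t) inferInstance) P)
    {s s' : ℝ≥0} (hss : s ≤ s') (u : ℝ) (hu : (∫ ω, ee (u * ε s' ω) ∂P) ≠ 0)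
    {Y : Ω → ℂ} (hY : Measurable[pastIncr ε s] Y) :
    ∫ ω, ee (u * (ε s ω - ε s' ω)) * Y ω ∂P =
      (∫ ω, ee (u * (ε s ω - ε s' ω)) ∂P) * ∫ ω, Y ω ∂P := by
  have h1 := step_aux (P := P) hε_meas hback hss u hY
  rw [step_char hε_meas hback hss u, mul_assoc] at h1
  exact (mul_left_cancel₀ hu h1).symm

lemma step_trig
    (hε_meas : ∀ s, Measurable (ε s))
    (hback : ∀ t : ℝ≥0, Indep (pastIncr ε t) (MeasurableSpace.comap (ε t) inferInstance) P)
    {s s' : ℝ≥0} (hss : s ≤ s') (u : ℝ) (hu : (∫ ω, ee (u * ε s' ω) ∂P) ≠ 0)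
    (hu' : (∫ ω, ee (-u * ε s' ω) ∂P) ≠ 0) (A B C : ℂ)
    {Y : Ω → ℂ} (hY : Measurable[pastIncr ε s] Y) (hYb : ∃ b, ∀ ω, ‖Y ω‖ ≤ b) :
    ∫ ω, (A + B * ee (u * (ε s ω - ε s' ω)) + C * ee (-(u * (ε s ω - ε s' ω)))) * Y ω ∂P =
      (∫ ω, (A + B * ee (u * (ε s ω - ε s' ω)) + C * ee (-(u * (ε s ω - ε s' ω)))) ∂P)
        * ∫ ω, Y ω ∂P := by
  have hYm : Measurable Y := hY.mono (pastIncr_le hε_meas s) le_rfl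
  obtain ⟨b, hb⟩ := hYb
  have iY : Integrable Y P := Integrable.of_bound hYm.aestronglyMeasurable b (ae_of_all _ hb)
  have me : ∀ v : ℝ, Measurable (fun ω => ee (v * (ε s ω - ε s' ω))) := fun v =>
    measurable_ee.comp (((hε_meas s).sub (hε_meas s')).const_mul v)
  have ie : ∀ v : ℝ, Integrable (fun ω => ee (v * (ε s ω - ε s' ω))) P := fun v =>
    Integrable.of_bound (me v).aestronglyMeasurable 1 (ae_of_all _ fun ω => (norm_ee _).le)
  have ieY : ∀ v : ℝ, Integrable (fun ω => ee (v * (ε s ω - ε s' ω)) * Y ω) P := fun v =>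
    Integrable.of_bound ((me v).mul hYm).aestronglyMeasurable b
      (ae_of_all _ fun ω => by rw [norm_mul, norm_ee, one_mul]; exact hb ω)
  have h1 := step_mul (P := P) hε_meas hback hss u hu hY
  have h2 := step_mul (P := P) hε_meas hback hss (-u) hu' hY
  simp_rw [← neg_mul, add_mul]
  simp_rw [mul_assoc] at *
  have j1 : Integrable (fun ω => A * Y ω + B * (ee (u * (ε s ω - ε s' ω)) * Y ω)) P :=
    (iY.const_mul A).add ((ieY u).const_mul B)
  have j2 : Integrable (fun ω => A + B * ee (u * (ε s ω - ε s' ω))) P :=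
    (integrable_const A).add ((ie u).const_mul B)
  rw [integral_add j1 ((ieY (-u)).const_mul C),
    integral_add (iY.const_mul A) ((ieY u).const_mul B),
    integral_add j2 ((ie (-u)).const_mul C),
    integral_add (integrable_const A) ((ie u).const_mul B)]
  simp only [integral_const_mul, h1, h2, integral_const, probReal_univ, one_smul]
  ring

/-- factorization over a partition -/
lemma prod_trig
    (hε_meas : ∀ s, Measurable (ε s))
    (hback : ∀ t : ℝ≥0, Indep (pastIncr ε t) (MeasurableSpace.comap (ε t) inferInstance) P)
    (s : ℕ → ℝ≥0) (hs : Monotone s) (u : ℝ) (n : ℕ)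
    (hu : ∀ k ≤ n, (∫ ω, ee (u * ε (s k) ω) ∂P) ≠ 0)
    (hu' : ∀ k ≤ n, (∫ ω, ee (-u * ε (s k) ω) ∂P) ≠ 0)
    (h : ℕ → Ω → ℂ) (A B C : ℕ → ℂ)
    (hh : ∀ k ω, h k ω = A k + B k * ee (u * (ε (s k) ω - ε (s (k+1)) ω))
      + C k * ee (-(u * (ε (s k) ω - ε (s (k+1)) ω))))
    {Y : Ω → ℂ} (hY : Measurable[pastIncr ε (s 0)] Y) (hYb : ∃ b, ∀ ω, ‖Y ω‖ ≤ b) :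
    Measurable[pastIncr ε (s n)] (fun ω => (∏ k ∈ Finset.range n, h k ω) * Y ω) ∧
    (∃ b, ∀ ω, ‖(∏ k ∈ Finset.range n, h k ω) * Y ω‖ ≤ b) ∧
    ∫ ω, (∏ k ∈ Finset.range n, h k ω) * Y ω ∂P
      = (∏ k ∈ Finset.range n, ∫ ω, h k ω ∂P) * ∫ ω, Y ω ∂P := by
  induction n with
  | zero => simpa using ⟨hY, hYb⟩
  | succ n ih =>
    obtain ⟨i1, i2, i3⟩ := ih (fun k hk => hu k (by omega)) (fun k hk => hu' k (by omega))
    have hle : s n ≤ s (n+1) := hs (Nat.le_succ n)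
    have e : ∀ ω, (∏ k ∈ Finset.range (n+1), h k ω) * Y ω
      = h n ω * ((∏ k ∈ Finset.range n, h k ω) * Y ω) := by
      intro ω; rw [Finset.prod_range_succ]; ring
    simp_rw [e]
    refine ⟨?_, ?_, ?_⟩
    · refine Measurable.mul (m := pastIncr ε (s (n+1))) ?_
        (i1.mono (pastIncr_mono ε hle) le_rfl)
      have : h n = (fun x : ℝ => A n + B n * ee (u * x) + C n * ee (-(u * x))) ∘
          fun ω => ε (s n) ω - ε (s (n+1)) ω := by ext ω; exact hh n ω
      rw [this]
      refine Measurable.comp ?_ (measurable_incr ε hle)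
      have := measurable_ee
      fun_prop
    · obtain ⟨b, hb⟩ := i2
      refine ⟨(‖A n‖ + ‖B n‖ + ‖C n‖) * b, fun ω => ?_⟩
      rw [norm_mul]
      refine mul_le_mul ?_ (hb ω) (norm_nonneg _) (by positivity)
      rw [hh]
      refine (norm_add₃_le).trans ?_
      rw [norm_mul, norm_mul, norm_ee, norm_ee, mul_one, mul_one]
    · have := step_trig (P := P) hε_meas hback hle u (hu (n+1) le_rfl) (hu' (n+1) le_rfl)
        (A n) (B n) (C n) i1 i2
      simp_rw [← hh] at this
      rw [this, i3, Finset.prod_range_succ]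
      ring

end Noise

section Partition

variable {Ω : Type*} [m0 : MeasurableSpace Ω] {P : Measure Ω} [IsProbabilityMeasure P]

/-- characteristic function of the increment between two times -/
def psi (P : Measure Ω) (ε : ℝ≥0 → Ω → ℝ) (v : ℝ) (s s' : ℝ≥0) : ℂ :=
  ∫ ω, ee (v * (ε s ω - ε s' ω)) ∂P

/-- centred scaled increments -/
def yy (P : Measure Ω) (ε : ℝ≥0 → Ω → ℝ) (v : ℝ) (s : ℕ → ℝ≥0) (k : ℕ) (ω : Ω) : ℝ :=
  v * (ε (s k) ω - ε (s (k+1)) ω) - Complex.arg (psi P ε v (s k) (s (k+1)))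

lemma ee_yy (ε : ℝ≥0 → Ω → ℝ) (v : ℝ) (s : ℕ → ℝ≥0) (k : ℕ) (ω : Ω) :
    ee (yy P ε v s k ω) = ee (-Complex.arg (psi P ε v (s k) (s (k+1))))
      * ee (v * (ε (s k) ω - ε (s (k+1)) ω)) := by
  rw [← ee_add, yy]; congr 1; ring

lemma ee_neg_yy (ε : ℝ≥0 → Ω → ℝ) (v : ℝ) (s : ℕ → ℝ≥0) (k : ℕ) (ω : Ω) :
    ee (-yy P ε v s k ω) = ee (Complex.arg (psi P ε v (s k) (s (k+1))))
      * ee (-(v * (ε (s k) ω - ε (s (k+1)) ω))) := by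
  rw [← ee_add, yy]; congr 1; ring

variable {ε : ℝ≥0 → Ω → ℝ}


lemma measurable_yy
    (hε_meas : ∀ s, Measurable (ε s))
    (v : ℝ) (s : ℕ → ℝ≥0) (k : ℕ) : Measurable (yy P ε v s k) := by
  have h1 := hε_meas (s k)
  have h2 := hε_meas (s (k+1))
  unfold yy
  fun_prop

lemma integral_one_sub_cos_yy
    (hε_meas : ∀ s, Measurable (ε s))
    (v : ℝ) (s : ℕ → ℝ≥0) (k : ℕ) :
    ∫ ω, (1 - Real.cos (yy P ε v s k ω)) ∂P = 1 - ‖psi P ε v (s k) (s (k+1))‖ := by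
  have hm := measurable_yy (P := P) hε_meas v s k
  have ie : Integrable (fun ω => ee (yy P ε v s k ω)) P :=
    Integrable.of_bound (measurable_ee.comp hm).aestronglyMeasurable 1
      (ae_of_all _ fun ω => (norm_ee _).le)
  have ic : Integrable (fun ω => Real.cos (yy P ε v s k ω)) P :=
    Integrable.of_bound (Real.measurable_cos.comp hm).aestronglyMeasurable 1
      (ae_of_all _ fun ω => by simpa using Real.abs_cos_le_one _)
  rw [integral_sub (integrable_const _) ic]
  have h1 : ∫ ω, ee (yy P ε v s k ω) ∂P = (‖psi P ε v (s k) (s (k+1))‖ : ℂ) := by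
    simp_rw [ee_yy, integral_const_mul]
    change ee (-(psi P ε v (s k) (s (k+1))).arg) * psi P ε v (s k) (s (k+1)) = _
    set z := psi P ε v (s k) (s (k+1))
    have h2 := Complex.norm_mul_exp_arg_mul_I z
    have h3 : ee (-z.arg) * ee z.arg = 1 := by rw [← ee_add]; simp [ee]
    calc ee (-z.arg) * z = ee (-z.arg) * (‖z‖ * ee z.arg) := by rw [h2]
      _ = ‖z‖ * (ee (-z.arg) * ee z.arg) := by ring
      _ = _ := by rw [h3, mul_one]
  have h2 : ∫ ω, Real.cos (yy P ε v s k ω) ∂P = (∫ ω, ee (yy P ε v s k ω) ∂P).re := by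
    have := integral_re ie
    simp only [RCLike.re_eq_complex_re] at this
    rw [← this]
    congr 1
    ext ω
    exact (Complex.exp_ofReal_mul_I_re _).symm
  rw [h2, h1]
  simp


lemma RR_facts
    (hε_meas : ∀ s, Measurable (ε s))
    (hback : ∀ t : ℝ≥0, Indep (pastIncr ε t) (MeasurableSpace.comap (ε t) inferInstance) P)
    (s : ℕ → ℝ≥0) (hs : Monotone s) (v a : ℝ) (n : ℕ)
    (hu : ∀ k ≤ n, (∫ ω, ee (v * ε (s k) ω) ∂P) ≠ 0)
    (hu' : ∀ k ≤ n, (∫ ω, ee (-v * ε (s k) ω) ∂P) ≠ 0) :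
    Integrable (fun ω => RR a n (fun k => yy P ε v s k ω)) P ∧
    ∫ ω, RR a n (fun k => yy P ε v s k ω) ∂P ≤
      Real.exp ((6 * a ^ 4 + 1) * (Real.log ‖∫ ω, ee (v * ε (s n) ω) ∂P‖
        - Real.log ‖∫ ω, ee (v * ε (s 0) ω) ∂P‖)) := by
  set K : ℝ := 6 * a ^ 4 + 1 with hK
  have hK0 : 0 ≤ K := by positivity
  obtain ⟨-, ⟨b, hb⟩, h3⟩ := prod_trig (P := P) hε_meas hback s hs v n hu hu'
    (fun k ω => ((1 + K * (1 - Real.cos (yy P ε v s k ω)) : ℝ) : ℂ))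
    (fun k => ((1 + K : ℝ) : ℂ))
    (fun k => -((K / 2 : ℝ) : ℂ) * ee (-Complex.arg (psi P ε v (s k) (s (k+1)))))
    (fun k => -((K / 2 : ℝ) : ℂ) * ee (Complex.arg (psi P ε v (s k) (s (k+1)))))
    (fun k ω => by
      rw [mul_assoc, mul_assoc, ← ee_yy, ← ee_neg_yy, ee_eq, ee_neg_eq]
      push_cast; ring)
    (Y := fun _ => 1) (@measurable_const _ _ _ (pastIncr ε (s 0)) _) ⟨1, by simp⟩
  have hRm : Measurable (fun ω => RR a n (fun k => yy P ε v s k ω)) := by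
    unfold RR
    refine Finset.measurable_prod _ fun k _ => ?_
    have := measurable_yy (P := P) hε_meas v s k
    fun_prop
  have hfint : Integrable (fun ω => RR a n (fun k => yy P ε v s k ω)) P := by
    refine Integrable.of_bound hRm.aestronglyMeasurable b (ae_of_all _ fun ω => ?_)
    have := hb ω
    rw [mul_one, ← Complex.ofReal_prod, Complex.norm_real] at this
    exact this
  refine ⟨hfint, ?_⟩
  have hprod : ∫ ω, RR a n (fun k => yy P ε v s k ω) ∂P
      = ∏ k ∈ Finset.range n, (1 + K * (1 - ‖psi P ε v (s k) (s (k+1))‖)) := by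
    have e : ∀ k, ∫ ω, (1 + K * (1 - Real.cos (yy P ε v s k ω))) ∂P
        = 1 + K * (1 - ‖psi P ε v (s k) (s (k+1))‖) := by
      intro k
      have hm := measurable_yy (P := P) hε_meas v s k
      have ic : Integrable (fun ω => 1 - Real.cos (yy P ε v s k ω)) P :=
        (integrable_const _).sub (Integrable.of_bound (Real.measurable_cos.comp hm).aestronglyMeasurable 1
          (ae_of_all _ fun ω => by simpa using Real.abs_cos_le_one _))
      rw [integral_add (integrable_const _) (ic.const_mul K), integral_const_mul,
        integral_one_sub_cos_yy hε_meas]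
      simp
    simp only [mul_one, integral_const, probReal_univ, one_smul, ← Complex.ofReal_prod,
      integral_complex_ofReal] at h3
    have h4 := Complex.ofReal_injective h3
    simp_rw [e] at h4
    exact h4
  rw [hprod]
  have hψ1 : ∀ k, ‖psi P ε v (s k) (s (k+1))‖ ≤ 1 := by
    intro k
    unfold psi
    refine (norm_integral_le_integral_norm _).trans ?_
    simp [norm_ee]
  refine (Real.prod_one_add_le_exp_sum _ ?_).trans ?_
  · intro k
    have := hψ1 k
    have : 0 ≤ 1 - ‖psi P ε v (s k) (s (k+1))‖ := by linarith
    positivity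
  · apply Real.exp_le_exp.2
    rw [← Finset.mul_sum]
    refine mul_le_mul_of_nonneg_left ?_ hK0
    rw [← Finset.sum_range_sub (fun k => Real.log ‖∫ ω, ee (v * ε (s k) ω) ∂P‖) n]
    refine Finset.sum_le_sum fun k hk => ?_
    have hk' := Finset.mem_range.1 hk
    have hc := step_char (P := P) hε_meas hback (hs (Nat.le_succ k)) v
    have h0 := hu k hk'.le
    have h1 := hu (k+1) hk'
    change _ = _ * psi P ε v (s k) (s (k+1)) at hc
    have hψ : psi P ε v (s k) (s (k+1)) ≠ 0 := by
      intro hz; rw [hz, mul_zero] at hc; exact h0 hc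
    rw [hc, norm_mul, Real.log_mul (norm_ne_zero_iff.2 h1) (norm_ne_zero_iff.2 hψ)]
    have := Real.log_le_sub_one_of_pos (norm_pos_iff.2 hψ)
    linarith

lemma partition_estimate
    (hε_meas : ∀ s, Measurable (ε s))
    (hback : ∀ t : ℝ≥0, Indep (pastIncr ε t) (MeasurableSpace.comap (ε t) inferInstance) P)
    (s : ℕ → ℝ≥0) (hs : Monotone s) (u v : ℝ) (hv : v ≠ 0) (n : ℕ)
    (hu : ∀ k ≤ n, (∫ ω, ee (v * ε (s k) ω) ∂P) ≠ 0)
    (hu' : ∀ k ≤ n, (∫ ω, ee (-v * ε (s k) ω) ∂P) ≠ 0)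
    (C η : ℝ) (hC0 : 0 ≤ C) (hη : 0 < η) (hη1 : η ≤ 1)
    (hC : ∀ y : ℝ, |y| ≤ 1 → ‖gg (u / v) y - ee (u / v * y)‖ ≤ C * |y| * (1 - Real.cos y))
    (harg : ∀ k < n, |Complex.arg (psi P ε v (s k) (s (k+1)))| ≤ η / 2)
    {Y : Ω → ℂ} (hY : Measurable[pastIncr ε (s 0)] Y) (b : ℝ) (hYb : ∀ ω, ‖Y ω‖ ≤ b) :
    ‖∫ ω, ee (u * (ε (s 0) ω - ε (s n) ω)) * Y ω ∂P
      - (∫ ω, ee (u * (ε (s 0) ω - ε (s n) ω)) ∂P) * ∫ ω, Y ω ∂P‖ ≤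
    2 * b * ((C + 1) * η * Real.exp ((6 * (u / v) ^ 4 + 1) *
        (Real.log ‖∫ ω, ee (v * ε (s n) ω) ∂P‖ - Real.log ‖∫ ω, ee (v * ε (s 0) ω) ∂P‖))
      + (1 / η + 1) * P.real {ω | ∃ k < n, η / 2 < |v * (ε (s k) ω - ε (s (k+1)) ω)|}) := by
  set a := u / v with ha
  obtain ⟨hRi, hR⟩ := RR_facts (P := P) hε_meas hback s hs v a n hu hu'
  set Λ := Real.exp ((6 * a ^ 4 + 1) *
        (Real.log ‖∫ ω, ee (v * ε (s n) ω) ∂P‖ - Real.log ‖∫ ω, ee (v * ε (s 0) ω) ∂P‖))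
  set bad := {ω | ∃ k < n, η / 2 < |v * (ε (s k) ω - ε (s (k+1)) ω)|} with hbad
  have hbadm : MeasurableSet bad := by
    have : bad = ⋃ k ∈ Finset.range n, {ω | η / 2 < |v * (ε (s k) ω - ε (s (k+1)) ω)|} := by
      ext ω; simp [hbad]
    rw [this]
    refine Finset.measurableSet_biUnion _ fun k _ => ?_
    have h1 := hε_meas (s k)
    have h2 := hε_meas (s (k+1))
    exact measurableSet_lt measurable_const (by fun_prop)
  have hb0 : 0 ≤ b := by
    obtain ⟨ω⟩ : Nonempty Ω := nonempty_of_isProbabilityMeasure P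
    exact (norm_nonneg _).trans (hYb ω)
  set Z : Ω → ℂ := fun ω => ∏ k ∈ Finset.range n, gg a (yy P ε v s k ω) with hZ
  set W : Ω → ℂ := fun ω => ee (a * ∑ k ∈ Finset.range n, yy P ε v s k ω) with hW
  set c : ℝ := -(a * ∑ k ∈ Finset.range n, Complex.arg (psi P ε v (s k) (s (k+1))))
  have hWe : ∀ ω, W ω = ee c * ee (u * (ε (s 0) ω - ε (s n) ω)) := by
    intro ω
    rw [hW, ← ee_add]
    simp only [yy]
    rw [Finset.sum_sub_distrib, ← Finset.mul_sum,
      Finset.sum_range_sub' (fun k => ε (s k) ω) n]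
    congr 1
    have : a * v = u := by rw [ha]; field_simp
    rw [← this]; ring
  have hgg : ∀ k ω, gg a (yy P ε v s k ω) = ((1 - a ^ 2 : ℝ) : ℂ)
      + (((a ^ 2 / 2 + a / 2 : ℝ) : ℂ) * ee (-Complex.arg (psi P ε v (s k) (s (k+1)))))
          * ee (v * (ε (s k) ω - ε (s (k+1)) ω))
      + (((a ^ 2 / 2 - a / 2 : ℝ) : ℂ) * ee (Complex.arg (psi P ε v (s k) (s (k+1)))))
          * ee (-(v * (ε (s k) ω - ε (s (k+1)) ω))) := by
    intro k ω
    rw [mul_assoc, mul_assoc, ← ee_yy, ← ee_neg_yy, gg_eq]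
  have f1 := (prod_trig (P := P) hε_meas hback s hs v n hu hu' _ _ _ _ hgg hY ⟨b, hYb⟩)
  have f2 := (prod_trig (P := P) hε_meas hback s hs v n hu hu' _ _ _ _ hgg
    (Y := fun _ => 1) (@measurable_const _ _ _ (pastIncr ε (s 0)) _) ⟨1, by simp⟩)
  have hfac : ∫ ω, Z ω * Y ω ∂P = (∫ ω, Z ω ∂P) * ∫ ω, Y ω ∂P := by
    have e2 := f2.2.2
    simp only [mul_one, integral_const, probReal_univ, one_smul] at e2
    rw [hZ, e2, f1.2.2]
  have hle := pastIncr_le hε_meas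
  have hYm : Measurable Y := hY.mono (hle _) le_rfl
  have hZm : Measurable Z := by
    have := f2.1.mono (hle _) le_rfl
    simpa only [mul_one] using this
  have hWm : Measurable W := by
    have h0 : ∀ k, Measurable (yy P ε v s k) := fun k => measurable_yy (P := P) hε_meas v s k
    exact measurable_ee.comp ((Finset.measurable_sum _ fun k _ => h0 k).const_mul a)
  have hZi : Integrable Z P := by
    obtain ⟨b', hb'⟩ := f2.2.1
    simp only [mul_one] at hb'
    exact Integrable.of_bound hZm.aestronglyMeasurable b' (ae_of_all _ hb')
  have hWi : Integrable W P :=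
    Integrable.of_bound hWm.aestronglyMeasurable 1 (ae_of_all _ fun ω => (norm_ee _).le)
  have hYi : Integrable Y P := Integrable.of_bound hYm.aestronglyMeasurable b (ae_of_all _ hYb)
  have hZYi : Integrable (fun ω => Z ω * Y ω) P :=
    hZi.mul_bdd hYm.aestronglyMeasurable (ae_of_all _ hYb)
  have hWYi : Integrable (fun ω => W ω * Y ω) P :=
    hWi.mul_bdd hYm.aestronglyMeasurable (ae_of_all _ hYb)
  -- L¹ distance
  have hL1 : ∫ ω, ‖W ω - Z ω‖ ∂P ≤ (C + 1) * η * Λ + (1 / η + 1) * P.real bad := by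
    have hpt : ∀ ω, ‖W ω - Z ω‖ ≤ (C + 1) * η * RR a n (fun k => yy P ε v s k ω)
        + bad.indicator (fun _ => (1 / η + 1)) ω := by
      intro ω
      have hR0 : 0 ≤ RR a n (fun k => yy P ε v s k ω) := by
        unfold RR
        refine Finset.prod_nonneg fun k _ => ?_
        have : 0 ≤ 1 - Real.cos (yy P ε v s k ω) := by linarith [Real.cos_le_one (yy P ε v s k ω)]
        positivity
      have hR0' : 0 ≤ η * RR a n (fun k => yy P ε v s k ω) := by positivity
      have hR0'' : 0 ≤ C * (η * RR a n (fun k => yy P ε v s k ω)) := by positivity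
      rw [norm_sub_rev]
      by_cases hω : ω ∈ bad
      · rw [indicator_of_mem hω]
        have := prod_gg_bad a η hη n (fun k => yy P ε v s k ω)
          (a * ∑ k ∈ Finset.range n, yy P ε v s k ω)
        refine this.trans ?_
        nlinarith
      · rw [indicator_of_notMem hω]
        have := prod_gg_good a C η hC0 hη.le hη1 hC n (fun k => yy P ε v s k ω) (by
          intro k hk
          have h1 : |v * (ε (s k) ω - ε (s (k+1)) ω)| ≤ η / 2 := by
            by_contra hcon
            exact hω ⟨k, hk, not_le.1 hcon⟩
          have h2 := harg k hk
          refine (abs_sub _ _).trans ?_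
          linarith)
        refine this.trans ?_
        nlinarith
    have hind : Integrable (bad.indicator (fun _ => (1 / η + 1))) P :=
      (integrable_const _).indicator hbadm
    refine (integral_mono (hWi.sub hZi).norm ((hRi.const_mul _).add hind) hpt).trans ?_
    simp only [Pi.add_apply]
    rw [integral_add (hRi.const_mul _) hind, integral_const_mul,
      integral_indicator_const _ hbadm, smul_eq_mul, mul_comm (P.real bad)]
    have : 0 ≤ (C + 1) * η := by positivity
    gcongr
  have hmain : ‖∫ ω, W ω * Y ω ∂P - (∫ ω, W ω ∂P) * ∫ ω, Y ω ∂P‖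
      ≤ 2 * b * ∫ ω, ‖W ω - Z ω‖ ∂P := by
    have e : ∫ ω, W ω * Y ω ∂P - (∫ ω, W ω ∂P) * ∫ ω, Y ω ∂P
        = ∫ ω, (W ω - Z ω) * Y ω ∂P - (∫ ω, (W ω - Z ω) ∂P) * ∫ ω, Y ω ∂P := by
      simp_rw [sub_mul]
      rw [integral_sub hWYi hZYi, integral_sub hWi hZi, hfac]
      ring
    rw [e]
    have n1 : ‖∫ ω, (W ω - Z ω) * Y ω ∂P‖ ≤ b * ∫ ω, ‖W ω - Z ω‖ ∂P := by
      rw [← integral_const_mul]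
      refine norm_integral_le_of_norm_le ((hWi.sub hZi).norm.const_mul b) (ae_of_all _ fun ω => ?_)
      rw [norm_mul, mul_comm]
      exact mul_le_mul_of_nonneg_right (hYb ω) (norm_nonneg _)
    have n2 : ‖∫ ω, (W ω - Z ω) ∂P‖ ≤ ∫ ω, ‖W ω - Z ω‖ ∂P := norm_integral_le_integral_norm _
    have n3 : ‖∫ ω, Y ω ∂P‖ ≤ b := by
      have := norm_integral_le_of_norm_le (integrable_const (μ := P) b) (ae_of_all _ hYb)
      simpa using this
    have n4 := mul_le_mul n2 n3 (norm_nonneg _) (by positivity)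
    rw [← norm_mul] at n4
    refine (norm_sub_le _ _).trans ?_
    linarith
  have hcW : ∫ ω, W ω * Y ω ∂P - (∫ ω, W ω ∂P) * ∫ ω, Y ω ∂P = ee c *
      (∫ ω, ee (u * (ε (s 0) ω - ε (s n) ω)) * Y ω ∂P
      - (∫ ω, ee (u * (ε (s 0) ω - ε (s n) ω)) ∂P) * ∫ ω, Y ω ∂P) := by
    simp_rw [hWe, mul_assoc, integral_const_mul]
    ring
  rw [hcW, norm_mul, norm_ee, one_mul] at hmain
  refine hmain.trans ?_
  gcongr

end Partition

section Limit

/-- partition points -/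
def pt (t θ : ℝ≥0) (n k : ℕ) : ℝ≥0 := t + (θ - t) * ((min k (n+1) : ℕ) / ((n + 1 : ℕ) : ℝ≥0))

lemma pt_zero (t θ : ℝ≥0) (n : ℕ) : pt t θ n 0 = t := by simp [pt]

lemma pt_last (t θ : ℝ≥0) (h : t ≤ θ) (n : ℕ) : pt t θ n (n+1) = θ := by
  have : ((n + 1 : ℕ) : ℝ≥0) ≠ 0 := by positivity
  rw [pt, min_self, div_self this, mul_one, add_tsub_cancel_of_le h]

lemma pt_mono (t θ : ℝ≥0) (n : ℕ) : Monotone (pt t θ n) := by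
  intro i j hij
  unfold pt
  gcongr

lemma pt_mem (t θ : ℝ≥0) (h : t ≤ θ) (n k : ℕ) (hk : k ≤ n + 1) : pt t θ n k ∈ Set.Icc t θ := by
  constructor
  · exact (pt_zero t θ n).symm.le.trans (pt_mono t θ n (Nat.zero_le k))
  · calc _ ≤ pt t θ n (n+1) := pt_mono t θ n hk
      _ = θ := pt_last t θ h n

lemma pt_dist (t θ : ℝ≥0) (n k : ℕ) (hk : k < n + 1) :
    dist (pt t θ n k) (pt t θ n (k+1)) = ((θ - t : ℝ≥0) : ℝ) * (1 / ((n : ℝ) + 1)) := by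
  have h1 : min k (n+1) = k := by omega
  have h2 : min (k+1) (n+1) = k+1 := by omega
  rw [NNReal.dist_eq, pt, pt, h1, h2]
  have : (0:ℝ) < (n:ℝ) + 1 := by positivity
  have hx : (0:ℝ) ≤ ((θ - t : ℝ≥0) : ℝ) := NNReal.coe_nonneg _
  rw [abs_sub_comm, abs_of_nonneg]
  · push_cast; field_simp; ring
  · push_cast
    have : ((θ - t : ℝ≥0) : ℝ) * ((k:ℝ) / (n+1)) ≤ ((θ - t : ℝ≥0) : ℝ) * (((k:ℝ)+1) / (n+1)) := by
      gcongr; linarith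
    push_cast at this
    linarith

lemma pt_dist_tendsto (t θ : ℝ≥0) (δ : ℝ) (hδ : 0 < δ) :
    ∀ᶠ n : ℕ in Filter.atTop, ∀ k < n + 1, dist (pt t θ n k) (pt t θ n (k+1)) < δ := by
  have h := (tendsto_one_div_add_atTop_nhds_zero_nat (𝕜 := ℝ)).const_mul ((θ - t : ℝ≥0) : ℝ)
  rw [mul_zero] at h
  filter_upwards [h.eventually (gt_mem_nhds hδ)] with n hn k hk
  rw [pt_dist t θ n k hk]
  exact hn

variable {Ω : Type*} [m0 : MeasurableSpace Ω] {P : Measure Ω} [IsProbabilityMeasure P]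
variable {ε : ℝ≥0 → Ω → ℝ}


lemma continuous_char
    (hε_meas : ∀ s, Measurable (ε s))
    (hε_cont : ∀ ω, Continuous fun s => ε s ω)
    :
    Continuous (fun p : ℝ≥0 × ℝ => ∫ ω, ee (p.2 * ε p.1 ω) ∂P) := by
  refine continuous_of_dominated (bound := fun _ => 1) (fun p => ?_) (fun p => ?_)
    (integrable_const _) (ae_of_all _ fun ω => ?_)
  · exact (measurable_ee.comp ((hε_meas p.1).const_mul p.2)).aestronglyMeasurable
  · exact ae_of_all _ fun ω => (norm_ee _).le
  · exact continuous_ee.comp (continuous_snd.mul ((hε_cont ω).comp continuous_fst))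

lemma continuous_psi
    (hε_meas : ∀ s, Measurable (ε s))
    (hε_cont : ∀ ω, Continuous fun s => ε s ω)
    (v : ℝ) :
    Continuous (fun p : ℝ≥0 × ℝ≥0 => psi P ε v p.1 p.2) := by
  unfold psi
  refine continuous_of_dominated (bound := fun _ => 1) (fun p => ?_) (fun p => ?_)
    (integrable_const _) (ae_of_all _ fun ω => ?_)
  · exact (measurable_ee.comp
      (((hε_meas p.1).sub (hε_meas p.2)).const_mul v)).aestronglyMeasurable
  · exact ae_of_all _ fun ω => (norm_ee _).le
  · exact continuous_ee.comp (continuous_const.mul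
      (((hε_cont ω).comp continuous_fst).sub ((hε_cont ω).comp continuous_snd)))

lemma exists_freq
    (hε_meas : ∀ s, Measurable (ε s))
    (hε_cont : ∀ ω, Continuous fun s => ε s ω)
    (t θ : ℝ≥0) : ∃ v : ℝ, v ≠ 0 ∧ ∀ r ∈ Set.Icc t θ,
    (∫ ω, ee (v * ε r ω) ∂P) ≠ 0 ∧ (∫ ω, ee (-v * ε r ω) ∂P) ≠ 0 := by
  have hc := continuous_char (P := P) hε_meas hε_cont
  have h1 : ∀ᶠ v : ℝ in nhds 0, ∀ r ∈ Set.Icc t θ, (∫ ω, ee (v * ε r ω) ∂P) ≠ 0 := by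
    refine (isCompact_Icc).eventually_forall_of_forall_eventually
      (P := fun v r => (∫ ω, ee (v * ε r ω) ∂P) ≠ 0) fun r _ => ?_
    have hc' : Continuous (fun p : ℝ × ℝ≥0 => ∫ ω, ee (p.1 * ε p.2 ω) ∂P) :=
      hc.comp continuous_swap
    refine hc'.continuousAt.eventually_ne ?_
    simp [ee]
  have h2 : ∀ᶠ v : ℝ in nhds 0, ∀ r ∈ Set.Icc t θ, (∫ ω, ee (-v * ε r ω) ∂P) ≠ 0 := by
    have : Filter.Tendsto (fun v : ℝ => -v) (nhds 0) (nhds 0) := by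
      simpa using (continuous_neg (G := ℝ)).tendsto 0
    exact this.eventually h1
  have h3 : ∀ᶠ v : ℝ in nhdsWithin 0 {0}ᶜ, v ≠ 0 := self_mem_nhdsWithin
  obtain ⟨v, hv1, hv2, hv3⟩ :=
    (h3.and ((h1.and h2).filter_mono nhdsWithin_le_nhds)).exists
  exact ⟨v, hv1, fun r hr => ⟨hv2 r hr, hv3 r hr⟩⟩

lemma eventually_arg
    (hε_meas : ∀ s, Measurable (ε s))
    (hε_cont : ∀ ω, Continuous fun s => ε s ω)
    (t θ : ℝ≥0) (h : t ≤ θ) (v η : ℝ) (hη : 0 < η) :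
    ∀ᶠ n : ℕ in Filter.atTop, ∀ k < n + 1,
      |Complex.arg (psi P ε v (pt t θ n k) (pt t θ n (k+1)))| ≤ η := by
  have ha : ContinuousAt Complex.arg 1 := Complex.continuousAt_arg (by simp)
  obtain ⟨ρ, hρ, hρ'⟩ := Metric.continuousAt_iff.1 ha η hη
  have huc := (isCompact_Icc.prod isCompact_Icc).uniformContinuousOn_of_continuous
    (s := Set.Icc t θ ×ˢ Set.Icc t θ)
    (continuous_psi (P := P) hε_meas hε_cont v).continuousOn
  obtain ⟨δ, hδ, hδ'⟩ := Metric.uniformContinuousOn_iff.1 huc ρ hρ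
  filter_upwards [pt_dist_tendsto t θ δ hδ] with n hn k hk
  have m1 := pt_mem t θ h n k hk.le
  have m2 := pt_mem t θ h n (k+1) hk
  have h1 := hδ' (pt t θ n k, pt t θ n (k+1)) ⟨m1, m2⟩ (pt t θ n k, pt t θ n k) ⟨m1, m1⟩ (by
    rw [Prod.dist_eq, dist_self, dist_comm]
    exact max_lt hδ (hn k hk))
  have h2 : psi P ε v (pt t θ n k) (pt t θ n k) = 1 := by simp [psi, ee]
  simp only [h2] at h1
  have h3 := hρ' h1
  rw [Complex.arg_one, Real.dist_eq, sub_zero] at h3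
  exact h3.le

lemma tendsto_bad
    (hε_meas : ∀ s, Measurable (ε s))
    (hε_cont : ∀ ω, Continuous fun s => ε s ω)
    (t θ : ℝ≥0) (h : t ≤ θ) (v η : ℝ) (hη : 0 < η) :
    Filter.Tendsto (fun n : ℕ => P.real {ω | ∃ k < n + 1,
      η < |v * (ε (pt t θ n k) ω - ε (pt t θ n (k+1)) ω)|}) Filter.atTop (nhds 0) := by
  have hm : ∀ n : ℕ, MeasurableSet {ω | ∃ k < n + 1,
      η < |v * (ε (pt t θ n k) ω - ε (pt t θ n (k+1)) ω)|} := by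
    intro n
    have : {ω | ∃ k < n + 1, η < |v * (ε (pt t θ n k) ω - ε (pt t θ n (k+1)) ω)|}
      = ⋃ k ∈ Finset.range (n+1), {ω | η < |v * (ε (pt t θ n k) ω - ε (pt t θ n (k+1)) ω)|} := by
      ext ω; simp
    rw [this]
    refine Finset.measurableSet_biUnion _ fun k _ => ?_
    have h1 := hε_meas (pt t θ n k)
    have h2 := hε_meas (pt t θ n (k+1))
    exact measurableSet_lt measurable_const (by fun_prop)
  have := tendsto_measure_of_tendsto_indicator_of_isFiniteMeasure (A := (∅ : Set Ω))
    Filter.atTop P hm (fun ω => by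
      have hc : Continuous (fun s => v * ε s ω) := (hε_cont ω).const_mul v
      have huc := (isCompact_Icc (a := t) (b := θ)).uniformContinuousOn_of_continuous hc.continuousOn
      obtain ⟨δ, hδ, hδ'⟩ := Metric.uniformContinuousOn_iff.1 huc η hη
      filter_upwards [pt_dist_tendsto t θ δ hδ] with n hn
      simp only [mem_empty_iff_false, iff_false, not_exists, not_and, not_lt]
      intro k hk
      have := hδ' _ (pt_mem t θ h n k hk.le) _ (pt_mem t θ h n (k+1) hk) (hn k hk)
      rw [Real.dist_eq, ← mul_sub] at this
      exact this.le)
  rw [measure_empty] at this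
  have h2 := (ENNReal.tendsto_toReal ENNReal.zero_ne_top).comp this
  rw [ENNReal.toReal_zero] at h2
  exact h2


lemma char_factor
    (hε_meas : ∀ s, Measurable (ε s))
    (hε_cont : ∀ ω, Continuous fun s => ε s ω)
    (hback : ∀ t : ℝ≥0, Indep (pastIncr ε t) (MeasurableSpace.comap (ε t) inferInstance) P)
    (t θ : ℝ≥0) (h : t ≤ θ) (u : ℝ)
    {Y : Ω → ℂ} (hY : Measurable[pastIncr ε t] Y) (b : ℝ) (hYb : ∀ ω, ‖Y ω‖ ≤ b) :
    ∫ ω, ee (u * (ε t ω - ε θ ω)) * Y ω ∂P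
      = (∫ ω, ee (u * (ε t ω - ε θ ω)) ∂P) * ∫ ω, Y ω ∂P := by
  obtain ⟨v, hv, hvr⟩ := exists_freq (P := P) hε_meas hε_cont t θ
  obtain ⟨C, hC0, hC⟩ := gg_sub_ee (u / v)
  rw [← sub_eq_zero, ← norm_le_zero_iff]
  set T := ‖∫ ω, ee (u * (ε t ω - ε θ ω)) * Y ω ∂P
      - (∫ ω, ee (u * (ε t ω - ε θ ω)) ∂P) * ∫ ω, Y ω ∂P‖
  set Λ := Real.exp ((6 * (u / v) ^ 4 + 1) *
        (Real.log ‖∫ ω, ee (v * ε θ ω) ∂P‖ - Real.log ‖∫ ω, ee (v * ε t ω) ∂P‖)) with hΛ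
  have step : ∀ η : ℝ, 0 < η → η ≤ 1 → T ≤ 2 * b * ((C + 1) * η * Λ) := by
    intro η hη hη1
    have hl := (((tendsto_bad (P := P) hε_meas hε_cont t θ h v (η / 2) (by positivity)).const_mul
      (1 / η + 1)).const_add ((C + 1) * η * Λ)).const_mul (2 * b)
    rw [mul_zero, add_zero] at hl
    refine ge_of_tendsto hl ?_
    filter_upwards [eventually_arg (P := P) hε_meas hε_cont t θ h v (η / 2) (by positivity)]
      with n hn
    have e := partition_estimate (P := P) hε_meas hback (pt t θ n) (pt_mono t θ n) u v hv (n+1)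
      (fun k hk => (hvr _ (pt_mem t θ h n k hk)).1) (fun k hk => (hvr _ (pt_mem t θ h n k hk)).2)
      C η hC0 hη hη1 hC hn (Y := Y) (by rw [pt_zero]; exact hY) b hYb
    rw [pt_zero, pt_last t θ h] at e
    exact e
  have hl : Filter.Tendsto (fun η : ℝ => 2 * b * ((C + 1) * η * Λ)) (nhdsWithin 0 (Set.Ioi 0))
      (nhds (2 * b * ((C + 1) * 0 * Λ))) := by
    apply Filter.Tendsto.mono_left _ nhdsWithin_le_nhds
    exact Continuous.tendsto (by fun_prop) 0
  rw [mul_zero, zero_mul, mul_zero] at hl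
  refine ge_of_tendsto hl ?_
  filter_upwards [Ioc_mem_nhdsGT (zero_lt_one' ℝ)] with η hη
  exact step η hη.1 hη.2

lemma incr_indep
    (hε_meas : ∀ s, Measurable (ε s))
    (hε_cont : ∀ ω, Continuous fun s => ε s ω)
    (hback : ∀ t : ℝ≥0, Indep (pastIncr ε t) (MeasurableSpace.comap (ε t) inferInstance) P)
    (t θ : ℝ≥0) (h : t ≤ θ) :
    Indep (pastIncr ε t) (MeasurableSpace.comap (fun ω => ε t ω - ε θ ω) inferInstance) P := by
  have hD : Measurable (fun ω => ε t ω - ε θ ω) := (hε_meas t).sub (hε_meas θ)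
  rw [Indep_iff]
  rintro A _ hA ⟨B, hB, rfl⟩
  have hA0 : MeasurableSet A := pastIncr_le hε_meas t _ hA
  have key : (P.restrict A).map (fun ω => ε t ω - ε θ ω)
      = P A • P.map (fun ω => ε t ω - ε θ ω) := by
    have : IsFiniteMeasure (P A • P.map (fun ω => ε t ω - ε θ ω)) := by
      have : IsProbabilityMeasure (P.map (fun ω => ε t ω - ε θ ω)) :=
        Measure.isProbabilityMeasure_map hD.aemeasurable
      exact Measure.smul_finite _ (measure_ne_top P A)
    apply Measure.ext_of_charFun
    ext u
    have hcm : ∀ ν : Measure ℝ, AEStronglyMeasurable (fun x : ℝ => ee (u * x)) ν := fun ν =>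
      (measurable_ee.comp (measurable_const_mul u)).aestronglyMeasurable
    have e : ∀ ν : Measure ℝ, charFun ν u = ∫ x, ee (u * x) ∂ν := by
      intro ν
      rw [charFun_apply_real]
      simp [ee]
    rw [e, e, integral_map hD.aemeasurable (hcm _), integral_smul_measure,
      integral_map hD.aemeasurable (hcm _)]
    have hf := char_factor (P := P) hε_meas hε_cont hback t θ h u
      (Y := A.indicator fun _ => 1)
      ((@measurable_const _ _ _ (pastIncr ε t) _).indicator hA) 1 (fun ω => by
        by_cases hω : ω ∈ A <;> simp [hω])
    rw [integral_indicator_const _ hA0] at hf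
    have hi : (∫ ω, ee (u * (ε t ω - ε θ ω)) * A.indicator (fun _ => (1:ℂ)) ω ∂P)
        = ∫ ω in A, ee (u * (ε t ω - ε θ ω)) ∂P := by
      rw [← integral_indicator hA0]
      congr 1
      ext ω
      by_cases hω : ω ∈ A <;> simp [hω]
    rw [← hi, hf]
    simp [Measure.real, mul_comm]
  have := congrArg (fun ν => ν B) key
  simp only [Measure.smul_apply, smul_eq_mul] at this
  rw [Measure.map_apply hD hB, Measure.map_apply hD hB, Measure.restrict_apply (hD hB),
    inter_comm] at this
  exact this

end Limit

/-- **First reduction step in the proof of Proposition 5.1.** In the noisy-barrier setup,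
for `0 ≤ t ≤ θ` and bounded `F_θ ⊗ B(ℝ)`-measurable `φ_θ`, `P`-a.s.,
`E_P[φ_θ(·, L + ε_θ) 1_{X*_θ > L} | F^I_t] = E_P[φ_θ(·, L + ε_θ) 1_{X*_θ > L} | F_t ∨
σ(L_t)]`: the past noise increments can be dropped from the conditioning. -/
theorem noisy_information_drop_past_increments
    {Ω : Type*} [m0 : MeasurableSpace Ω] {P : Measure Ω} [IsProbabilityMeasure P]
    (F : Filtration ℝ≥0 m0)
    (X : ℝ≥0 → Ω → ℝ) (hX_adapted : Adapted F X)
    (hX_cont : ∀ ω, Continuous fun s => X s ω)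
    (L : Ω → ℝ) (hL : Measurable L)
    -- the noise process: continuous, independent of `F_∞ ∨ σ(L)`, with backwardly
    -- independent increments
    (ε : ℝ≥0 → Ω → ℝ) (hε_meas : ∀ s, Measurable (ε s))
    (hε_cont : ∀ ω, Continuous fun s => ε s ω)
    (hε_indep : Indep (⨆ s, MeasurableSpace.comap (ε s) inferInstance)
      ((⨆ s, F s) ⊔ MeasurableSpace.comap L inferInstance) P)
    (hε_back : ∀ t θ : ℝ≥0, t ≤ θ →
      Indep (⨆ s ∈ Set.Iic t, MeasurableSpace.comap (fun ω => ε s ω - ε t ω) inferInstance)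
        (MeasurableSpace.comap (ε θ) inferInstance) P)
    -- times and payoff
    (t θ : ℝ≥0) (htθ : t ≤ θ)
    (φ : Ω × ℝ → ℝ)
    (hφ_meas : Measurable[(F θ).prod inferInstance] φ)
    (hφ_bdd : ∃ C, ∀ z, |φ z| ≤ C) :
    (P[fun ω => φ (ω, L ω + ε θ ω) *
        (if L ω < runInf X θ ω then 1 else 0)|insiderSigma F L ε t]) =ᵐ[P]
    (P[fun ω => φ (ω, L ω + ε θ ω) *
        (if L ω < runInf X θ ω then 1 else 0)|
          F t ⊔ MeasurableSpace.comap (fun ω => L ω + ε t ω) inferInstance]) := by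
  have hback : ∀ t : ℝ≥0, Indep (pastIncr ε t) (MeasurableSpace.comap (ε t) inferInstance) P :=
    fun t => hε_back t t le_rfl
  have hD0 : Measurable[m0] (fun ω => ε t ω - ε θ ω) := (hε_meas t).sub (hε_meas θ)
  have hG0 : pastIncr ε t ≤ m0 := pastIncr_le hε_meas t
  have hH0 : (⨆ s, F s) ⊔ MeasurableSpace.comap L inferInstance ≤ m0 :=
    sup_le (iSup_le fun s => F.le s) hL.comap_le
  have hGE : Indep (pastIncr ε t) (MeasurableSpace.comap (fun ω => ε t ω - ε θ ω) inferInstance ⊔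
      MeasurableSpace.comap (ε θ) inferInstance) P := by
    refine indep_sup_right (m0 := m0) hG0 hD0.comap_le (hε_meas θ).comap_le
      (incr_indep (m0 := m0) hε_meas hε_cont hback t θ htθ) ?_
    exact indep_of_indep_of_le_left (hback θ)
      (sup_le (pastIncr_mono ε htθ) (measurable_incr ε htθ).comap_le)
  have hall : ∀ s, Measurable[⨆ s, MeasurableSpace.comap (ε s) inferInstance] (ε s) := fun s =>
    measurable_iff_comap_le.2 (le_iSup (fun s => MeasurableSpace.comap (ε s) inferInstance) s)
  have hGM : Indep (pastIncr ε t) ((MeasurableSpace.comap (fun ω => ε t ω - ε θ ω) inferInstance ⊔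
      MeasurableSpace.comap (ε θ) inferInstance) ⊔
      ((⨆ s, F s) ⊔ MeasurableSpace.comap L inferInstance)) P := by
    refine indep_sup_right (m0 := m0) hG0 (sup_le hD0.comap_le (hε_meas θ).comap_le) hH0 hGE ?_
    refine indep_of_indep_of_le_left hε_indep (sup_le ?_ (sup_le ?_ (hall θ).comap_le))
    · exact iSup₂_le fun s _ => ((hall s).sub (hall t)).comap_le
    · exact ((hall t).sub (hall θ)).comap_le
  have hEq : insiderSigma F L ε t =
      (F t ⊔ MeasurableSpace.comap (fun ω => L ω + ε t ω) inferInstance) ⊔ pastIncr ε t := by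
    apply le_antisymm
    · refine sup_le (le_sup_left.trans le_sup_left) (iSup₂_le fun s hs => ?_)
      rw [← measurable_iff_comap_le]
      have h1 : Measurable[(F t ⊔ MeasurableSpace.comap (fun ω => L ω + ε t ω) inferInstance)
          ⊔ pastIncr ε t] (fun ω => L ω + ε t ω) :=
        measurable_iff_comap_le.2 (le_sup_right.trans le_sup_left)
      have h2 := (measurable_incr ε (show s ≤ t from hs)).mono
        (le_sup_right (a := F t ⊔ MeasurableSpace.comap (fun ω => L ω + ε t ω) inferInstance))
        le_rfl
      have : (fun ω => L ω + ε s ω) = fun ω => (L ω + ε t ω) + (ε s ω - ε t ω) := by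
        ext ω; ring
      rw [this]
      exact h1.add h2
    · have hm : ∀ s ≤ t, Measurable[insiderSigma F L ε t] (fun ω => L ω + ε s ω) := by
        intro s hs
        refine measurable_iff_comap_le.2 (le_trans ?_ le_sup_right)
        exact le_iSup₂_of_le s hs le_rfl
      refine sup_le (sup_le le_sup_left (hm t le_rfl).comap_le) (iSup₂_le fun s hs => ?_)
      rw [← measurable_iff_comap_le]
      have : (fun ω => ε s ω - ε t ω) = fun ω => (L ω + ε s ω) - (L ω + ε t ω) := by
        ext ω; ring
      rw [this]
      exact (hm s hs).sub (hm t le_rfl)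
  have hM0 : (MeasurableSpace.comap (fun ω => ε t ω - ε θ ω) inferInstance ⊔
      MeasurableSpace.comap (ε θ) inferInstance) ⊔
      ((⨆ s, F s) ⊔ MeasurableSpace.comap L inferInstance) ≤ m0 :=
    sup_le (sup_le hD0.comap_le (hε_meas θ).comap_le) hH0
  generalize hMdef : (MeasurableSpace.comap (fun ω => ε t ω - ε θ ω) inferInstance ⊔
      MeasurableSpace.comap (ε θ) inferInstance) ⊔
      ((⨆ s, F s) ⊔ MeasurableSpace.comap L inferInstance) = M at hGM hM0
  have mF : ∀ s, F s ≤ M := fun s => by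
    rw [← hMdef]
    exact (le_iSup (fun s => F s) s).trans (le_sup_left.trans le_sup_right)
  have mL : Measurable[M] L := by
    rw [← hMdef]
    exact measurable_iff_comap_le.2 (le_sup_right.trans le_sup_right)
  have mD : Measurable[M] (fun ω => ε t ω - ε θ ω) := by
    rw [← hMdef]
    exact measurable_iff_comap_le.2 (le_sup_left.trans le_sup_left)
  have mθ : Measurable[M] (ε θ) := by
    rw [← hMdef]
    exact measurable_iff_comap_le.2 (le_sup_right.trans le_sup_left)
  have mt : Measurable[M] (fun ω => L ω + ε t ω) := by
    have : (fun ω => L ω + ε t ω) = fun ω => L ω + ((ε t ω - ε θ ω) + ε θ ω) := by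
      ext ω; ring
    rw [this]
    exact mL.add (mD.add mθ)
  have mR : Measurable[M] (runInf X θ) :=
    measurable_runInf θ (fun s hs => ((hX_adapted s).mono (mF s) le_rfl)) hX_cont
  have mpair : @Measurable Ω (Ω × ℝ) M ((F θ).prod inferInstance)
      (fun ω => (ω, L ω + ε θ ω)) :=
    @Measurable.prodMk Ω M Ω ℝ (F θ) inferInstance id _
      (measurable_id.mono (mF θ) le_rfl) (mL.add mθ)
  have mφ : Measurable[M] (fun ω => φ (ω, L ω + ε θ ω)) := hφ_meas.comp mpair
  have mset : MeasurableSet[M] {ω | L ω < runInf X θ ω} :=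
    measurableSet_lt mL mR
  have mI : Measurable[M] (fun ω => if L ω < runInf X θ ω then (1 : ℝ) else 0) := by
    refine Measurable.ite (m := M) (f := fun _ => (1 : ℝ)) (g := fun _ => (0 : ℝ)) mset ?_ ?_
    · exact measurable_const
    · exact measurable_const
  have mf := mφ.mul mI
  have hfint : Integrable (fun ω => φ (ω, L ω + ε θ ω) *
        (if L ω < runInf X θ ω then 1 else 0)) P := by
    obtain ⟨C, hC⟩ := hφ_bdd
    refine Integrable.of_bound (mf.mono hM0 le_rfl).aestronglyMeasurable C
      (Filter.Eventually.of_forall fun ω => ?_)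
    have h0 : 0 ≤ C := (abs_nonneg _).trans (hC (ω, 0))
    rw [Real.norm_eq_abs]
    split_ifs
    · rw [mul_one]; exact hC _
    · rw [mul_zero, abs_zero]; exact h0
  rw [hEq]
  exact condExp_sup_of_indep (m0 := m0) hG0 hM0 (sup_le (mF t) mt.comap_le) hGM mf hfint
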